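/- For every (x,y) ∈ ℝ², the second Reissner–Mindlin equation holds for the pair (θ, w): −λ t⁻² ∇·(∇w − θ)(x,y) = g(x,y). -/

import Mathlib

/-! With `b(s) = s³(s-1)³` (`bub`) and `p = b''/6` (`bubDD`), one has
`w = b(x)b(y)/3 - c (b(y)p(x) + b(x)p(y))` where `c = 2t²/(5(1-ν))`, and `θ = ∇(b(x)b(y)/3)`.
Hence `∇w - θ = -c ∇(b(y)p(x) + b(x)p(y))` (`shear_fst`). Since `b'' = 6p` and
`p'' = 12(5s² - 5s + 1)`, its divergence is explicit (`pdx_shear_fst`, and `pdy_shear_snd` by the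
symmetry `x ↔ y`), and `λ t⁻² c = 2E/(12(1-ν²))` turns the claim into a polynomial identity. -/

noncomputable section

open Set

/-- Partial derivative in the first variable. -/
def pdx (f : ℝ → ℝ → ℝ) (x y : ℝ) : ℝ := deriv (fun s => f s y) x

/-- Partial derivative in the second variable. -/
def pdy (f : ℝ → ℝ → ℝ) (x y : ℝ) : ℝ := deriv (fun s => f x s) y

/-- Young's modulus. -/
def E : ℝ := 1.092

/-- Poisson's ratio. -/
def ν : ℝ := 0.3

/-- D = E / (12 (1 - ν²)). -/
def Dc : ℝ := E / (12 * (1 - ν ^ 2))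

/-- Shear correction factor λ = 5E / (12 (1 + ν)). -/
def lam : ℝ := 5 * E / (12 * (1 + ν))

/-- First component of the rotation field θ. -/
def θ₁ (x y : ℝ) : ℝ := y ^ 3 * (y - 1) ^ 3 * x ^ 2 * (x - 1) ^ 2 * (2 * x - 1)

/-- Second component of the rotation field θ. -/
def θ₂ (x y : ℝ) : ℝ := x ^ 3 * (x - 1) ^ 3 * y ^ 2 * (y - 1) ^ 2 * (2 * y - 1)

/-- Transverse displacement w (depending on the thickness t). -/
def w (t x y : ℝ) : ℝ :=
  (1 / 3) * x ^ 3 * (x - 1) ^ 3 * y ^ 3 * (y - 1) ^ 3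
    - (2 * t ^ 2 / (5 * (1 - ν))) *
      (y ^ 3 * (y - 1) ^ 3 * x * (x - 1) * (5 * x ^ 2 - 5 * x + 1)
        + x ^ 3 * (x - 1) ^ 3 * y * (y - 1) * (5 * y ^ 2 - 5 * y + 1))

/-- First component of the row-wise divergence of C ε(θ), where
    (C τ) = D ((1-ν) τ + ν tr(τ) I₂) and ε(θ) = (∇θ + ∇θᵀ)/2. -/
def divCeps₁ (f₁ f₂ : ℝ → ℝ → ℝ) (x y : ℝ) : ℝ :=
  pdx (fun a b => Dc * ((1 - ν) * pdx f₁ a b + ν * (pdx f₁ a b + pdy f₂ a b))) x y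
    + pdy (fun a b => Dc * ((1 - ν) * ((pdy f₁ a b + pdx f₂ a b) / 2))) x y

/-- Second component of the row-wise divergence of C ε(θ). -/
def divCeps₂ (f₁ f₂ : ℝ → ℝ → ℝ) (x y : ℝ) : ℝ :=
  pdx (fun a b => Dc * ((1 - ν) * ((pdy f₁ a b + pdx f₂ a b) / 2))) x y
    + pdy (fun a b => Dc * ((1 - ν) * pdy f₂ a b + ν * (pdx f₁ a b + pdy f₂ a b))) x y

/-- Divergence of the shear vector ∇w - θ. -/
def divShear (W f₁ f₂ : ℝ → ℝ → ℝ) (x y : ℝ) : ℝ :=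
  pdx (fun a b => pdx W a b - f₁ a b) x y + pdy (fun a b => pdy W a b - f₂ a b) x y

/-- Body load g. -/
def g (x y : ℝ) : ℝ :=
  (E / (12 * (1 - ν ^ 2))) *
    (12 * y * (y - 1) * (5 * x ^ 2 - 5 * x + 1) *
        (2 * y ^ 2 * (y - 1) ^ 2 + x * (x - 1) * (5 * y ^ 2 - 5 * y + 1))
      + 12 * x * (x - 1) * (5 * y ^ 2 - 5 * y + 1) *
        (2 * x ^ 2 * (x - 1) ^ 2 + y * (y - 1) * (5 * x ^ 2 - 5 * x + 1)))

/-- The bubble `s³(s-1)³`, from which `θ` and `w` are built. -/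
def bub (s : ℝ) : ℝ := s ^ 3 * (s - 1) ^ 3

/-- One sixth of the second derivative of `bub`. -/
def bubDD (s : ℝ) : ℝ := s * (s - 1) * (5 * s ^ 2 - 5 * s + 1)

lemma hasDerivAt_bub (s : ℝ) :
    HasDerivAt bub (3 * (s ^ 2 * (s - 1) ^ 2 * (2 * s - 1))) s := by
  have h := ((hasDerivAt_id' s).pow 3).mul (((hasDerivAt_id' s).sub_const 1).pow 3)
  refine h.congr_deriv ?_
  simp only [Pi.pow_apply]
  push_cast
  ring

lemma hasDerivAt_bub_deriv (s : ℝ) :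
    HasDerivAt (fun s : ℝ => 3 * (s ^ 2 * (s - 1) ^ 2 * (2 * s - 1))) (6 * bubDD s) s := by
  have h := (((((hasDerivAt_id' s).pow 2).mul (((hasDerivAt_id' s).sub_const 1).pow 2)).mul
    (((hasDerivAt_id' s).const_mul 2).sub_const 1)).const_mul 3)
  refine h.congr_deriv ?_
  simp only [Pi.pow_apply, Pi.mul_apply, bubDD]
  push_cast
  ring

lemma hasDerivAt_bubDD (s : ℝ) :
    HasDerivAt bubDD ((2 * s - 1) * (10 * s ^ 2 - 10 * s + 1)) s := by
  have h := ((hasDerivAt_id' s).mul ((hasDerivAt_id' s).sub_const 1)).mul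
    (((((hasDerivAt_id' s).pow 2).const_mul 5).sub ((hasDerivAt_id' s).const_mul 5)).add_const 1)
  refine h.congr_deriv ?_
  simp only [Pi.pow_apply, Pi.mul_apply, Pi.sub_apply]
  push_cast
  ring

lemma hasDerivAt_bubDD_deriv (s : ℝ) :
    HasDerivAt (fun s : ℝ => (2 * s - 1) * (10 * s ^ 2 - 10 * s + 1))
      (12 * (5 * s ^ 2 - 5 * s + 1)) s := by
  have h := (((hasDerivAt_id' s).const_mul 2).sub_const 1).mul
    (((((hasDerivAt_id' s).pow 2).const_mul 10).sub ((hasDerivAt_id' s).const_mul 10)).add_const 1)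
  refine h.congr_deriv ?_
  simp only [Pi.pow_apply, Pi.sub_apply]
  push_cast
  ring

lemma w_eq (t x y : ℝ) : w t x y = (1 / 3) * bub y * bub x
    - (2 * t ^ 2 / (5 * (1 - ν))) * (bub y * bubDD x + bubDD y * bub x) := by
  unfold w bub bubDD
  ring

lemma w_symm (t x y : ℝ) : w t x y = w t y x := by
  unfold w
  ring

/-- The `θ₁` term cancels against the leading part of `∂w/∂x`, so the first shear component is
of order `t²`. -/
lemma shear_fst (t x y : ℝ) : pdx (w t) x y - θ₁ x y = -(2 * t ^ 2 / (5 * (1 - ν))) *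
    (bub y * ((2 * x - 1) * (10 * x ^ 2 - 10 * x + 1))
      + bubDD y * (3 * (x ^ 2 * (x - 1) ^ 2 * (2 * x - 1)))) := by
  have h : HasDerivAt (fun s => w t s y) _ x :=
    ((((hasDerivAt_bub x).const_mul ((1 / 3) * bub y)).sub
      ((((hasDerivAt_bubDD x).const_mul (bub y)).add
        ((hasDerivAt_bub x).const_mul (bubDD y))).const_mul
          (2 * t ^ 2 / (5 * (1 - ν)))))).congr_of_eventuallyEq
      (Filter.Eventually.of_forall fun s => w_eq t s y)
  rw [pdx, h.deriv]
  unfold θ₁ bub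
  ring

lemma pdx_shear_fst (t x y : ℝ) : pdx (fun a b => pdx (w t) a b - θ₁ a b) x y =
    -(2 * t ^ 2 / (5 * (1 - ν))) *
      (bub y * (12 * (5 * x ^ 2 - 5 * x + 1)) + bubDD y * (6 * bubDD x)) := by
  simp only [shear_fst]
  exact ((((hasDerivAt_bubDD_deriv x).const_mul (bub y)).add
    ((hasDerivAt_bub_deriv x).const_mul (bubDD y))).const_mul _).deriv

/-- Exchanging the variables fixes `w` and swaps `θ₁` with `θ₂`, so the `y`-derivative of the second
shear component is the `x`-derivative of the first one at `(y, x)`. -/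
lemma pdy_shear_snd (t x y : ℝ) : pdy (fun a b => pdy (w t) a b - θ₂ a b) x y =
    pdx (fun a b => pdx (w t) a b - θ₁ a b) y x := by
  simp only [pdx, pdy, w_symm t x]
  rfl

/-- the second Reissner–Mindlin equation
−λ t⁻² ∇·(∇w − θ) = g holds at every point of ℝ². -/
theorem reissner_mindlin_square_second_equation (t : ℝ) (ht : 0 < t) :
    ∀ x y : ℝ, -(lam * t⁻¹ ^ 2) * divShear (w t) θ₁ θ₂ x y = g x y := by
  intro x y
  have ht' : t ≠ 0 := ht.ne'
  rw [divShear, pdy_shear_snd, pdx_shear_fst, pdx_shear_fst]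
  unfold g lam bub bubDD
  have h1 : (1 : ℝ) - ν ≠ 0 := by norm_num [ν]
  have h2 : (1 : ℝ) + ν ≠ 0 := by norm_num [ν]
  have h3 : (1 : ℝ) - ν ^ 2 = (1 - ν) * (1 + ν) := by ring
  rw [h3]
  field_simp
  ring
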